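/- arXiv:1808.04712 — 9 statements merged into one kernel-verified Lean document; each statement's English description precedes it below -/
import Mathlib

section
/- Let L > 0, let c : ℝ → ℝ be non-decreasing, convex and differentiable, and suppose both c and its derivative c' are L-Lipschitz. Let k > 0 and let a, δ ∈ ℝ with 0 ≤ a ≤ δ, and let t ∈ ℝ. Then ((a + k)·c(t + k) − a·c(t)) / k ≤ c(t) + a·c'(t) + k·L·(δ + 1). -/
/-- Lemma 2 of the paper (first inequality), per-resource analytic form:
if `c` is non-decreasing, convex, differentiable, and both `c` and `deriv c`
are `L`-Lipschitz, then the discrete marginal cost of adding a packet of size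
`k` is bounded by the continuous marginal cost plus `k·L·(δ+1)`. -/
theorem stmt_0 (L : ℝ) (hL : 0 < L) (c : ℝ → ℝ)
    (hmono : Monotone c) (hconv : ConvexOn ℝ Set.univ c)
    (hdiff : Differentiable ℝ c)
    (hlip : ∀ x y : ℝ, |c y - c x| ≤ L * |y - x|)
    (hlip' : ∀ x y : ℝ, |deriv c y - deriv c x| ≤ L * |y - x|)
    (k : ℝ) (hk : 0 < k) (a δ t : ℝ) (ha0 : 0 ≤ a) (haδ : a ≤ δ) :
    ((a + k) * c (t + k) - a * c t) / k ≤ c t + a * deriv c t + k * L * (δ + 1) := by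
  obtain ⟨ξ, ⟨hξ₁, hξ₂⟩, hξ⟩ := exists_deriv_eq_slope c (lt_add_of_pos_right t hk)
    hdiff.continuous.continuousOn hdiff.differentiableOn
  rw [add_sub_cancel_left, eq_div_iff hk.ne'] at hξ
  have hderiv : deriv c ξ ≤ deriv c t + L * k := by
    have h := (le_abs_self _).trans (hlip' t ξ)
    rw [abs_of_pos (sub_pos.2 hξ₁)] at h
    have : L * (ξ - t) ≤ L * k := by gcongr; linarith
    linarith
  have hc : c (t + k) ≤ c t + L * k := by
    have h := (le_abs_self _).trans (hlip t (t + k))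
    rw [add_sub_cancel_left, abs_of_pos hk] at h
    linarith
  have hsplit : ((a + k) * c (t + k) - a * c t) / k = a * deriv c ξ + c (t + k) := by
    rw [div_eq_iff hk.ne']
    linear_combination -a * hξ
  have haderiv : a * deriv c ξ ≤ a * (deriv c t + L * k) := by gcongr
  have haδ' : k * L * a ≤ k * L * δ := by gcongr
  rw [hsplit]
  linarith
end

section
/- Let L > 0, let c : ℝ → ℝ be non-decreasing, convex and differentiable, and suppose both c and its derivative c' are L-Lipschitz. Let k > 0 and let a, δ ∈ ℝ with 0 < a ≤ δ, and let t ∈ ℝ. Then (a·c(t) − (a − k)·c(t − k)) / k ≥ c(t) + a·c'(t) − k·L·(δ + 1). -/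
/-- Lemma 2 of the paper (second inequality), per-resource analytic form:
if `c` is non-decreasing, convex, differentiable, and both `c` and `deriv c`
are `L`-Lipschitz, then the discrete marginal gain of removing a packet of size
`k` is at least the continuous marginal cost minus `k·L·(δ+1)`. -/
theorem stmt_1 (L : ℝ) (hL : 0 < L) (c : ℝ → ℝ)
    (hmono : Monotone c) (hconv : ConvexOn ℝ Set.univ c)
    (hdiff : Differentiable ℝ c)
    (hlip : ∀ x y : ℝ, |c y - c x| ≤ L * |y - x|)
    (hlip' : ∀ x y : ℝ, |deriv c y - deriv c x| ≤ L * |y - x|)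
    (k : ℝ) (hk : 0 < k) (a δ t : ℝ) (ha0 : 0 < a) (haδ : a ≤ δ) :
    (a * c t - (a - k) * c (t - k)) / k ≥ c t + a * deriv c t - k * L * (δ + 1) := by
  obtain ⟨ξ, ⟨hξ₁, hξ₂⟩, hξ⟩ := exists_deriv_eq_slope c (sub_lt_self t hk)
    hdiff.continuous.continuousOn hdiff.differentiableOn
  rw [sub_sub_cancel] at hξ
  have hsplit : (a * c t - (a - k) * c (t - k)) / k = a * deriv c ξ + c (t - k) := by
    rw [hξ]
    field_simp
    ring
  have hderiv : deriv c t - L * k ≤ deriv c ξ := by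
    have h := (le_abs_self _).trans (hlip' ξ t)
    rw [abs_of_pos (sub_pos.2 hξ₂)] at h
    have : L * (t - ξ) ≤ L * k := by gcongr; linarith
    linarith
  have hval : c t - L * k ≤ c (t - k) := by
    have h := (le_abs_self _).trans (hlip (t - k) t)
    rw [sub_sub_cancel, abs_of_pos hk] at h
    linarith
  have hslope : a * (deriv c t - L * k) ≤ a * deriv c ξ := by gcongr
  have hload : L * k * a ≤ L * k * δ := by gcongr
  rw [hsplit]
  linarith
end

section
/- Let L > 0 and k > 0. Let c_e, c_f : ℝ → ℝ be non-decreasing, convex and differentiable functions such that c_e, c_f and their derivatives c'_e, c'_f are all L-Lipschitz. Let δ ≥ 0 and let a_e, a_f, t_e, t_f ∈ ℝ with 0 < a_e ≤ δ and 0 ≤ a_f ≤ δ. If a_e·c_e(t_e) − (a_e − k)·c_e(t_e − k) ≤ (a_f + k)·c_f(t_f + k) − a_f·c_f(t_f), then (c_f(t_f) + a_f·c'_f(t_f)) − (c_e(t_e) + a_e·c'_e(t_e)) ≥ −2·k·L·(δ + 1). -/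
/-- A differentiable function whose derivative is `L`-Lipschitz has increments over `[x, y]` within
`L * (y - x) ^ 2` of the linear approximations at both endpoints. -/
theorem sub_bounds_of_deriv_lipschitz {L x y : ℝ} {c : ℝ → ℝ} (hL : 0 ≤ L)
    (hc : Differentiable ℝ c) (hlip : ∀ x y : ℝ, |deriv c y - deriv c x| ≤ L * |y - x|)
    (hxy : x < y) :
    (y - x) * (deriv c y - L * (y - x)) ≤ c y - c x ∧
      c y - c x ≤ (y - x) * (deriv c x + L * (y - x)) := by
  obtain ⟨z, ⟨hxz, hzy⟩, hz⟩ :=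
    exists_deriv_eq_slope c hxy hc.continuous.continuousOn hc.differentiableOn
  have hpos : 0 < y - x := sub_pos.2 hxy
  have hslope : c y - c x = (y - x) * deriv c z := by
    rw [hz]
    field_simp
  have hx := (le_abs_self _).trans (hlip x z)
  have hy := (le_abs_self _).trans (hlip z y)
  rw [abs_of_pos (sub_pos.2 hxz)] at hx
  rw [abs_of_pos (sub_pos.2 hzy)] at hy
  have hx' : L * (z - x) ≤ L * (y - x) := by gcongr
  have hy' : L * (y - z) ≤ L * (y - x) := by gcongr
  rw [hslope]
  constructor <;> refine mul_le_mul_of_nonneg_left ?_ hpos.le <;> linarith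

/-- Analytic core of Lemma 3 of the paper: if the `k`-integral marginal gain of
removing a packet from resource `e` is at most the `k`-integral marginal cost of
adding a packet to resource `f`, then the difference of the continuous marginal
costs is at least `−2kL(δ+1)`. -/
theorem stmt_2 (L k : ℝ) (hL : 0 < L) (hk : 0 < k)
    (ce cf : ℝ → ℝ)
    (hce_mono : Monotone ce) (hcf_mono : Monotone cf)
    (hce_conv : ConvexOn ℝ Set.univ ce) (hcf_conv : ConvexOn ℝ Set.univ cf)
    (hce_diff : Differentiable ℝ ce) (hcf_diff : Differentiable ℝ cf)
    (hce_lip : ∀ x y : ℝ, |ce y - ce x| ≤ L * |y - x|)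
    (hcf_lip : ∀ x y : ℝ, |cf y - cf x| ≤ L * |y - x|)
    (hce_lip' : ∀ x y : ℝ, |deriv ce y - deriv ce x| ≤ L * |y - x|)
    (hcf_lip' : ∀ x y : ℝ, |deriv cf y - deriv cf x| ≤ L * |y - x|)
    (δ ae af te tf : ℝ) (hδ : 0 ≤ δ)
    (hae : 0 < ae) (haeδ : ae ≤ δ) (haf : 0 ≤ af) (hafδ : af ≤ δ)
    (h : ae * ce te - (ae - k) * ce (te - k) ≤ (af + k) * cf (tf + k) - af * cf tf) :
    (cf tf + af * deriv cf tf) - (ce te + ae * deriv ce te) ≥ -(2 * k * L * (δ + 1)) := by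
  obtain ⟨he, -⟩ := sub_bounds_of_deriv_lipschitz hL.le hce_diff hce_lip' (sub_lt_self te hk)
  obtain ⟨-, hf⟩ := sub_bounds_of_deriv_lipschitz hL.le hcf_diff hcf_lip' (lt_add_of_pos_right tf hk)
  have he' := (le_abs_self _).trans (hce_lip (te - k) te)
  have hf' := (le_abs_self _).trans (hcf_lip tf (tf + k))
  rw [sub_sub_cancel] at he he'
  rw [add_sub_cancel_left] at hf hf'
  rw [abs_of_pos hk] at he' hf'
  have hmul : k * (ae * (deriv ce te - L * k) + (ce te - L * k)) ≤
      k * (af * (deriv cf tf + L * k) + (cf tf + L * k)) := by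
    linarith [mul_le_mul_of_nonneg_left he hae.le, mul_le_mul_of_nonneg_left hf haf,
      mul_le_mul_of_nonneg_left he' hk.le, mul_le_mul_of_nonneg_left hf' hk.le]
  have hdiv := le_of_mul_le_mul_left hmul hk
  have hLk : 0 ≤ L * k := by positivity
  linarith [mul_le_mul_of_nonneg_right haeδ hLk, mul_le_mul_of_nonneg_right hafδ hLk]
end

section
/- Let G be an atomic splittable polymatroid congestion game in which every cost function c_{i,e} and every derivative c'_{i,e} is L-Lipschitz, and set δ = max_{i ∈ N} d_i. Let k > 0 satisfy ρ_i(U)/k ∈ ℕ for all players i and all U ⊆ E, and d_i/k ∈ ℕ for all i. Let x = (x_i)_{i∈N} be a strategy profile of the k-integral game G_k in which x_i is a best response of player i to x_{−i}. Then for every pair of resources e, f ∈ E: if there exists α > 0 such that x_i + α(χ_f − χ_e) ∈ P_{ρ_i}(d_i), then μ_{i,f}(x) − μ_{i,e}(x) ≥ −2·k·L·(δ + 1). -/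
/-- A rank function: submodular, monotone, normalized set function. -/
def IsRank {E : Type*} [Fintype E] [DecidableEq E] (ρ : Finset E → ℝ) : Prop :=
  (∀ U V : Finset E, ρ (U ∪ V) + ρ (U ∩ V) ≤ ρ U + ρ V) ∧
  (∀ U V : Finset E, U ⊆ V → ρ U ≤ ρ V) ∧ ρ ∅ = 0

/-- Membership in the polymatroid base polytope `P_ρ(d)`. -/
def memBase {E : Type*} [Fintype E] [DecidableEq E] (ρ : Finset E → ℝ) (d : ℝ)
    (x : E → ℝ) : Prop :=
  (∀ e, 0 ≤ x e) ∧ (∀ U : Finset E, ∑ e ∈ U, x e ≤ ρ U) ∧ (∑ e, x e = d)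

/-- Membership in the `k`-integral base polytope `P^k_ρ(d)`. -/
def memKBase {E : Type*} [Fintype E] [DecidableEq E] (ρ : Finset E → ℝ) (d k : ℝ)
    (x : E → ℝ) : Prop :=
  memBase ρ d x ∧ ∀ e, ∃ q : ℕ, x e = k * q

/-- Transferring `a` units from resource `e` to resource `f`. -/
def exchange {E : Type*} [DecidableEq E] (x : E → ℝ) (e f : E) (a : ℝ) : E → ℝ :=
  fun e' => x e' + a * ((if e' = f then 1 else 0) - (if e' = e then 1 else 0))

theorem sum_exchange {E : Type*} [DecidableEq E] (x : E → ℝ) (e f : E) (a : ℝ) (U : Finset E) :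
    ∑ e' ∈ U, exchange x e f a e' =
      ∑ e' ∈ U, x e' + a * ((if f ∈ U then 1 else 0) - (if e ∈ U then 1 else 0)) := by
  simp [exchange, Finset.sum_add_distrib, ← Finset.mul_sum, Finset.sum_sub_distrib]

theorem add_le_of_lt_of_multiple {k s r : ℝ} (hk : 0 < k) (hs : ∃ q : ℕ, s = k * q)
    (hr : ∃ q : ℕ, r = k * q) (h : s < r) : s + k ≤ r := by
  obtain ⟨p, rfl⟩ := hs
  obtain ⟨q, rfl⟩ := hr
  have hpq : p + 1 ≤ q := by exact_mod_cast lt_of_mul_lt_mul_left h hk.le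
  have hpq' : (p : ℝ) + 1 ≤ q := by exact_mod_cast hpq
  nlinarith

theorem exists_sum_eq_mul_natCast {E : Type*} {k : ℝ} {x : E → ℝ}
    (hx : ∀ e, ∃ q : ℕ, x e = k * q) (U : Finset E) : ∃ q : ℕ, ∑ e ∈ U, x e = k * q := by
  choose q hq using hx
  exact ⟨∑ e ∈ U, q e, by simp [hq, Finset.mul_sum]⟩

/-- If some fractional exchange is feasible at a `k`-integral base, then so is the exchange of
`k` units. -/
theorem memKBase_exchange {E : Type*} [Fintype E] [DecidableEq E] {ρ : Finset E → ℝ}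
    {d k : ℝ} (hk : 0 < k) (hρk : ∀ U, ∃ q : ℕ, ρ U = k * q) {x : E → ℝ}
    (hx : memKBase ρ d k x) {e f : E} (hef : e ≠ f) {a : ℝ} (ha : 0 < a)
    (h : memBase ρ d (exchange x e f a)) : memKBase ρ d k (exchange x e f k) := by
  obtain ⟨⟨hx0, hxρ, hxd⟩, hxk⟩ := hx
  have hke : k ≤ x e := by
    have he := h.1 e
    simp only [exchange, if_neg hef, if_true] at he
    simpa using add_le_of_lt_of_multiple hk ⟨0, by simp⟩ (hxk e) (by linarith : (0 : ℝ) < x e)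
  refine ⟨⟨fun e' => ?_, fun U => ?_, ?_⟩, fun e' => ?_⟩
  · have := hx0 e'
    unfold exchange
    split_ifs with h1 h2 h2 <;> subst_vars <;> linarith
  · have hU := h.2.1 U
    have hxU := hxρ U
    rw [sum_exchange] at hU ⊢
    split_ifs at hU ⊢
    · linarith
    · have := add_le_of_lt_of_multiple hk (exists_sum_eq_mul_natCast hxk U) (hρk U) (by linarith)
      linarith
    · linarith
    · linarith
  · rw [sum_exchange]
    simpa using hxd
  · obtain ⟨q, hq⟩ := hxk e'
    by_cases h2 : e' = e
    · subst h2
      have hq1 : 1 ≤ q := by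
        rcases Nat.eq_zero_or_pos q with rfl | hq0
        · simp at hq
          linarith
        · exact hq0
      refine ⟨q - 1, ?_⟩
      simp only [exchange, if_neg hef, if_true, hq]
      push_cast [hq1]
      ring
    · by_cases h1 : e' = f
      · refine ⟨q + 1, ?_⟩
        simp only [exchange, if_neg h2, if_pos h1, hq]
        push_cast
        ring
      · exact ⟨q, by simp [exchange, h1, h2, hq]⟩

/-- If the derivative is `L`-Lipschitz, the slope over an interval of length `k` is within `L * k`
of the derivatives at the endpoints. -/
theorem exists_slope_near_deriv {g : ℝ → ℝ} (hg : Differentiable ℝ g) {L : ℝ} (hL : 0 < L)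
    (hlip : ∀ x y, |deriv g y - deriv g x| ≤ L * |y - x|) (s : ℝ) {k : ℝ} (hk : 0 < k) :
    ∃ m, g (s + k) - g s = k * m ∧ m ≤ deriv g s + L * k ∧ deriv g (s + k) - L * k ≤ m := by
  obtain ⟨ξ, ⟨h1, h2⟩, hξ⟩ := exists_deriv_eq_slope g (by linarith : s < s + k)
    hg.continuous.continuousOn hg.differentiableOn
  refine ⟨deriv g ξ, ?_, ?_, ?_⟩
  · rw [hξ, add_sub_cancel_left, mul_div_cancel₀ _ hk.ne']
  · have h := (abs_le.1 (hlip s ξ)).2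
    rw [abs_of_pos (by linarith)] at h
    nlinarith
  · have h := (abs_le.1 (hlip ξ (s + k))).2
    rw [abs_of_pos (by linarith)] at h
    nlinarith

theorem sum_update_apply {N E : Type*} [Fintype N] [DecidableEq N] (x : N → E → ℝ) (i : N)
    (y : E → ℝ) (e : E) :
    ∑ j, Function.update x i y j e = ∑ j, x j e + (y e - x i e) := by
  have h : ∀ j, Function.update x i y j e = x j e + if j = i then y e - x i e else 0 := by
    intro j
    by_cases hj : j = i
    · subst hj
      simp
    · simp [hj]
  simp [h, Finset.sum_add_distrib]

/-- Lemma 3 of the paper in game form: in an atomic splittable polymatroid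
congestion game with `L`-Lipschitz costs and derivatives, if each `x i` is a
best response in the `k`-integral game and a fractional exchange from `e` to
`f` is feasible for player `i`, then the continuous marginal costs satisfy
`μ_{i,f}(x) − μ_{i,e}(x) ≥ −2kL(δ+1)` where `δ = max_i d_i`. -/
theorem stmt_3 {N E : Type*} [Fintype N] [Nonempty N] [DecidableEq N]
    [Fintype E] [DecidableEq E]
    (ρ : N → Finset E → ℝ) (hρ : ∀ i, IsRank (ρ i))
    (d : N → ℝ) (hd : ∀ i, 0 < d i) (hdρ : ∀ i, d i ≤ ρ i Finset.univ)
    (c : N → E → ℝ → ℝ)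
    (hcnonneg : ∀ i e t, 0 ≤ c i e t)
    (hcmono : ∀ i e, Monotone (c i e))
    (hcdiff : ∀ i e, Differentiable ℝ (c i e))
    (hcconv : ∀ i e, ConvexOn ℝ Set.univ (c i e))
    (L : ℝ) (hL : 0 < L)
    (hlip : ∀ i e x y, |c i e y - c i e x| ≤ L * |y - x|)
    (hlip' : ∀ i e x y, |deriv (c i e) y - deriv (c i e) x| ≤ L * |y - x|)
    (δ : ℝ) (hδ : IsGreatest (Set.range d) δ)
    (k : ℝ) (hk : 0 < k)
    (hρk : ∀ i U, ∃ q : ℕ, ρ i U = k * q)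
    (hdk : ∀ i, ∃ q : ℕ, d i = k * q)
    (x : N → E → ℝ) (hx : ∀ i, memKBase (ρ i) (d i) k (x i))
    (hbr : ∀ i yi, memKBase (ρ i) (d i) k yi →
      ∑ e, c i e (∑ j, x j e) * x i e ≤
        ∑ e, c i e (∑ j, Function.update x i yi j e) * yi e)
    (i : N) (e f : E)
    (hexch : ∃ α > 0, memBase (ρ i) (d i)
      (fun e' => x i e' + α * ((if e' = f then 1 else 0) - (if e' = e then 1 else 0)))) :
    (c i f (∑ j, x j f) + x i f * deriv (c i f) (∑ j, x j f)) -
      (c i e (∑ j, x j e) + x i e * deriv (c i e) (∑ j, x j e)) ≥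
      -(2 * k * L * (δ + 1)) := by
  have hδd : ∀ i, d i ≤ δ := fun i => hδ.2 ⟨i, rfl⟩
  have hδ0 : 0 < δ := (hd i).trans_le (hδd i)
  rcases eq_or_ne e f with rfl | hef
  · rw [sub_self]
    have : 0 ≤ 2 * k * L * (δ + 1) := by positivity
    linarith
  obtain ⟨α, hα, hfeas⟩ := hexch
  have hb := hbr i _ (memKBase_exchange hk (hρk i) (hx i) hef hα hfeas)
  have hx0 := (hx i).1.1
  have hxδ : ∀ e', x i e' ≤ δ := fun e' =>
    ((Finset.single_le_sum (fun j _ => hx0 j) (Finset.mem_univ e')).trans_eq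
      (hx i).1.2.2).trans (hδd i)
  simp only [sum_update_apply] at hb
  rw [← sub_nonneg, ← Finset.sum_sub_distrib, Fintype.sum_eq_add e f hef] at hb
  swap
  · rintro e' ⟨h1, h2⟩
    simp [exchange, h1, h2]
  have hye : exchange (x i) e f k e = x i e - k := by simp [exchange, hef, sub_eq_add_neg]
  have hyf : exchange (x i) e f k f = x i f + k := by simp [exchange, hef.symm]
  rw [hye, hyf] at hb
  generalize (∑ j, x j e) = a at hb ⊢
  generalize (∑ j, x j f) = b at hb ⊢
  have hae : a + (x i e - k - x i e) = a - k := by ring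
  have hbf : b + (x i f + k - x i f) = b + k := by ring
  rw [hae, hbf] at hb
  obtain ⟨m, hm, -, hm'⟩ := exists_slope_near_deriv (hcdiff i e) hL (hlip' i e) (a - k) hk
  obtain ⟨n, hn, hn', -⟩ := exists_slope_near_deriv (hcdiff i f) hL (hlip' i f) b hk
  rw [sub_add_cancel] at hm hm'
  have hmL := (abs_le.1 (hlip i e (a - k) a)).2
  have hnL := (abs_le.1 (hlip i f b (b + k))).2
  rw [sub_sub_cancel, abs_of_pos hk] at hmL
  rw [add_sub_cancel_left, abs_of_pos hk] at hnL
  have hcf : c i f (b + k) = c i f b + k * n := by linarith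
  have hce : c i e (a - k) = c i e a - k * m := by linarith
  rw [hcf, hce] at hb
  have hmL' : k * m ≤ L * k := by linarith
  have hnL' : k * n ≤ L * k := by linarith
  -- the best-response inequality divided by `k`
  have key : 0 ≤ (c i f b + n * x i f + k * n) - (c i e a + m * x i e - k * m) := by
    refine nonneg_of_mul_nonneg_right ?_ hk
    nlinarith
  have h1 := mul_le_mul_of_nonneg_right hn' (hx0 f)
  have h2 := mul_le_mul_of_nonneg_right hm' (hx0 e)
  have h3 := mul_le_mul_of_nonneg_left (hxδ f) (mul_pos hL hk).le
  have h4 := mul_le_mul_of_nonneg_left (hxδ e) (mul_pos hL hk).le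
  linarith
end

section
/- Let E be a finite set, ρ a rank function on E, d > 0, and let x, y ∈ P_ρ(d). Set E⁻ = {e ∈ E : x_e > y_e} and E⁺ = {e ∈ E : y_e > x_e}. Then there exists t : E⁻ × E⁺ → ℝ_{≥0} such that Σ_{f∈E⁺} t_{e,f} = x_e − y_e for every e ∈ E⁻, Σ_{e∈E⁻} t_{e,f} = y_f − x_f for every f ∈ E⁺, and x + t_{e,f}·(χ_f − χ_e) ∈ P_ρ(d) for every (e,f) ∈ E⁻ × E⁺. -/
open Finset

/-- Total change of the squared defect of a row or column when one entry is shifted. -/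
lemma sum_sq_sub_ite {ι : Type*} [Fintype ι] [DecidableEq ι] (p : ι → ℝ) (i : ι) (ε : ℝ) :
    ∑ j, (p j - if j = i then ε else 0) ^ 2 = ∑ j, p j ^ 2 - 2 * ε * p i + ε ^ 2 := by
  have h : ∀ j, (p j - if j = i then ε else 0) ^ 2
      = p j ^ 2 + if j = i then ε ^ 2 - 2 * ε * p i else 0 := by
    intro j
    split_ifs with hj
    · subst hj; ring
    · ring
  simp only [h, sum_add_distrib, sum_ite_eq', mem_univ, if_true]
  ring

/-- A capacitated matrix minimizing the sum of squared row and column defects admits no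
improving change of a single entry. -/
lemma exists_matrix_defect_optimal {ι κ : Type*} [Fintype ι] [Fintype κ]
    (a : ι → ℝ) (b : κ → ℝ) (c : ι → κ → ℝ) (hc : ∀ i j, 0 ≤ c i j) :
    ∃ t : ι → κ → ℝ, (∀ i j, 0 ≤ t i j) ∧ (∀ i j, t i j ≤ c i j) ∧
      (∀ i j, t i j < c i j → (a i - ∑ l, t i l) + (b j - ∑ k, t k j) ≤ 0) ∧
      (∀ i j, 0 < t i j → 0 ≤ (a i - ∑ l, t i l) + (b j - ∑ k, t k j)) := by
  classical
  let Φ : (ι → κ → ℝ) → ℝ := fun t =>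
    ∑ i, (a i - ∑ l, t i l) ^ 2 + ∑ j, (b j - ∑ k, t k j) ^ 2
  have hΦ : Continuous Φ := by fun_prop
  obtain ⟨t, ht, hmin⟩ := (isCompact_Icc (a := (0 : ι → κ → ℝ)) (b := c)).exists_isMinOn
    ⟨0, le_rfl, fun i j => hc i j⟩ hΦ.continuousOn
  have ht0 : ∀ i j, 0 ≤ t i j := fun i j => ht.1 i j
  have htc : ∀ i j, t i j ≤ c i j := fun i j => ht.2 i j
  have key : ∀ i j ε, 0 ≤ t i j + ε → t i j + ε ≤ c i j →
      0 ≤ ε * (ε - ((a i - ∑ l, t i l) + (b j - ∑ k, t k j))) := by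
    intro i j ε h0 h1
    let s : ι → κ → ℝ := fun k l => t k l + if k = i then (if l = j then ε else 0) else 0
    have hs : s ∈ Set.Icc (0 : ι → κ → ℝ) c := by
      constructor <;> intro k l <;> simp only [s, Pi.zero_apply] <;> split_ifs with hk hl
      · subst hk hl; exact h0
      · simpa using ht0 k l
      · simpa using ht0 k l
      · subst hk hl; exact h1
      · simpa using htc k l
      · simpa using htc k l
    have hle : Φ t ≤ Φ s := hmin hs
    have hrow : ∀ k, a k - ∑ l, s k l = (a k - ∑ l, t k l) - if k = i then ε else 0 := by
      intro k
      by_cases hk : k = i <;> simp [s, hk, sum_add_distrib]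
      ring
    have hcol : ∀ l, b l - ∑ k, s k l = (b l - ∑ k, t k l) - if l = j then ε else 0 := by
      intro l
      simp [s, sum_add_distrib]
      ring
    simp only [Φ, hrow, hcol] at hle
    rw [sum_sq_sub_ite (fun k => a k - ∑ l, t k l), sum_sq_sub_ite (fun l => b l - ∑ k, t k l)]
      at hle
    linarith
  refine ⟨t, ht0, htc, fun i j hlt => ?_, fun i j hpos => ?_⟩
  · by_contra! hp
    set r := (a i - ∑ l, t i l) + (b j - ∑ k, t k j)
    have hε : 0 < min (c i j - t i j) (r / 2) := lt_min (by linarith) (by linarith)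
    have h1 := min_le_left (c i j - t i j) (r / 2)
    have h2 := min_le_right (c i j - t i j) (r / 2)
    have := key i j (min (c i j - t i j) (r / 2)) (by linarith [ht0 i j]) (by linarith)
    nlinarith
  · by_contra! hp
    set r := (a i - ∑ l, t i l) + (b j - ∑ k, t k j)
    have hε : 0 < min (t i j) (-r / 2) := lt_min hpos (by linarith)
    have h1 := min_le_left (t i j) (-r / 2)
    have h2 := min_le_right (t i j) (-r / 2)
    have := key i j (-min (t i j) (-r / 2)) (by linarith) (by linarith [htc i j])
    nlinarith

/-- Gale's theorem for capacitated transportation: the cut condition suffices for the existence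
of a capacitated nonnegative matrix with prescribed row and column sums. -/
theorem exists_transport_of_cut {ι κ : Type*} [Fintype ι] [Fintype κ] [DecidableEq ι]
    (a : ι → ℝ) (b : κ → ℝ) (c : ι → κ → ℝ)
    (ha : ∀ i, 0 ≤ a i) (hb : ∀ j, 0 ≤ b j) (hc : ∀ i j, 0 ≤ c i j)
    (hab : ∑ i, a i = ∑ j, b j)
    (hcut : ∀ (A : Finset ι) (F : Finset κ),
      ∑ j ∈ F, b j ≤ ∑ i ∈ Aᶜ, a i + ∑ i ∈ A, ∑ j ∈ F, c i j) :
    ∃ t : ι → κ → ℝ, (∀ i j, 0 ≤ t i j) ∧ (∀ i j, t i j ≤ c i j) ∧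
      (∀ i, ∑ j, t i j = a i) ∧ (∀ j, ∑ i, t i j = b j) := by
  classical
  obtain ⟨t, ht0, htc, hlt, hpos⟩ := exists_matrix_defect_optimal a b c hc
  refine ⟨t, ht0, htc, ?_⟩
  set p : ι → ℝ := fun i => a i - ∑ l, t i l with hp
  set q : κ → ℝ := fun j => b j - ∑ k, t k j with hq
  have hfull : ∀ i j, 0 < p i + q j → t i j = c i j := fun i j h =>
    le_antisymm (htc i j) (not_lt.1 fun h' => absurd (hlt i j h') (not_le.2 h))
  have hzero : ∀ i j, p i + q j < 0 → t i j = 0 := fun i j h =>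
    le_antisymm (not_lt.1 fun h' => absurd (hpos i j h') (not_le.2 h)) (ht0 i j)
  have hdefect : ∀ (A : Finset ι) (F : Finset κ),
      (∀ i ∈ A, ∀ j ∈ F, 0 < p i + q j) → (∀ i ∉ A, ∀ j ∉ F, p i + q j < 0) →
      ∑ j ∈ F, q j ≤ ∑ i ∈ Aᶜ, p i := by
    intro A F h1 h2
    have hA : ∑ i ∈ A, ∑ j ∈ F, c i j = ∑ i ∈ A, ∑ j ∈ F, t i j :=
      sum_congr rfl fun i hi => sum_congr rfl fun j hj => (hfull i j (h1 i hi j hj)).symm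
    have hAc : ∑ i ∈ Aᶜ, ∑ j, t i j = ∑ i ∈ Aᶜ, ∑ j ∈ F, t i j :=
      sum_congr rfl fun i hi => (sum_subset (subset_univ F) fun j _ hj =>
        hzero i j (h2 i (mem_compl.1 hi) j hj)).symm
    have hF : ∑ j ∈ F, ∑ i, t i j = ∑ i ∈ A, ∑ j ∈ F, t i j + ∑ i ∈ Aᶜ, ∑ j ∈ F, t i j := by
      rw [sum_comm, sum_add_sum_compl]
    have := hcut A F
    simp only [hp, hq, sum_sub_distrib]
    linarith
  have hpq : ∑ i, p i = ∑ j, q j := by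
    simp only [hp, hq, sum_sub_distrib, hab]
    rw [sum_comm]
  have hp0 : ∀ i, p i ≤ 0 := by
    have h := hdefect (univ.filter fun i => 0 < p i) (univ.filter fun j => 0 ≤ q j)
      (by intro i hi j hj; simp at hi hj; linarith) (by intro i hi j hj; simp at hi hj; linarith)
    by_contra! ⟨i, hi⟩
    have h1 : 0 < ∑ i ∈ univ.filter (fun i => 0 < p i), p i :=
      sum_pos (fun i hi => (mem_filter.1 hi).2) ⟨i, by simpa using hi⟩
    have h2 : ∑ j ∈ (univ.filter fun j => 0 ≤ q j)ᶜ, q j ≤ 0 :=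
      sum_nonpos fun j hj => by simp at hj; exact hj.le
    have h3 := sum_add_sum_compl (univ.filter fun i => 0 < p i) p
    have h4 := sum_add_sum_compl (univ.filter fun j => 0 ≤ q j) q
    linarith
  have hq0 : ∀ j, q j ≤ 0 := by
    have h := hdefect (univ.filter fun i => 0 ≤ p i) (univ.filter fun j => 0 < q j)
      (by intro i hi j hj; simp at hi hj; linarith) (by intro i hi j hj; simp at hi hj; linarith)
    by_contra! ⟨j, hj⟩
    have h1 : 0 < ∑ j ∈ univ.filter (fun j => 0 < q j), q j :=
      sum_pos (fun j hj => (mem_filter.1 hj).2) ⟨j, by simpa using hj⟩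
    have h2 : ∑ i ∈ (univ.filter fun i => 0 ≤ p i)ᶜ, p i ≤ 0 :=
      sum_nonpos fun i hi => by simp at hi; exact hi.le
    linarith
  constructor
  · intro i
    by_contra hne
    have hi : p i < 0 := lt_of_le_of_ne (hp0 i) fun h => hne (sub_eq_zero.1 h).symm
    have : ∑ l, t i l = 0 := sum_eq_zero fun l _ => hzero i l (by linarith [hq0 l])
    simp only [hp] at hi
    linarith [ha i]
  · intro j
    by_contra hne
    have hj : q j < 0 := lt_of_le_of_ne (hq0 j) fun h => hne (sub_eq_zero.1 h).symm
    have : ∑ k, t k j = 0 := sum_eq_zero fun k _ => hzero k j (by linarith [hp0 k])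
    simp only [hq] at hj
    linarith [hb j]

/-- Uncrossing: sets separating each `f ∈ F` from each `e ∈ A` combine, by intersections and
unions, into one set separating `F` from `A`, at no greater total cost. -/
lemma exists_separating_le_sum {E : Type*} [DecidableEq E] (g : Finset E → ℝ)
    (hsub : ∀ U V, g (U ∪ V) + g (U ∩ V) ≤ g U + g V) (hg : ∀ U, 0 ≤ g U) (hg0 : g ∅ = 0)
    (c : E → E → ℝ) {A : Finset E} (hA : A.Nonempty) (F : Finset E)
    (hc : ∀ e ∈ A, ∀ f ∈ F, ∃ U, f ∈ U ∧ e ∉ U ∧ g U ≤ c e f) :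
    ∃ W, F ⊆ W ∧ Disjoint W A ∧ g W ≤ ∑ e ∈ A, ∑ f ∈ F, c e f := by
  have hinter : ∀ f ∈ F, ∃ W, f ∈ W ∧ Disjoint W A ∧ g W ≤ ∑ e ∈ A, c e f := by
    intro f hf
    induction hA using Finset.Nonempty.cons_induction with
    | singleton e =>
      obtain ⟨U, hfU, heU, hU⟩ := hc e (by simp) f hf
      exact ⟨U, hfU, by simpa using heU, by simpa using hU⟩
    | cons e A he hA ih =>
      obtain ⟨W, hfW, hWA, hW⟩ := ih fun e' he' => hc e' (mem_cons_of_mem he')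
      obtain ⟨U, hfU, heU, hU⟩ := hc e (mem_cons_self e A) f hf
      refine ⟨U ∩ W, mem_inter.2 ⟨hfU, hfW⟩, ?_, ?_⟩
      · rw [cons_eq_insert, disjoint_insert_right]
        exact ⟨fun h => heU (mem_inter.1 h).1, hWA.mono_left inter_subset_right⟩
      · rw [sum_cons]
        linarith [hsub U W, hg (U ∪ W)]
  clear hc
  rw [sum_comm]
  induction F using Finset.induction_on with
  | empty => exact ⟨∅, by simp, by simp, by simp [hg0]⟩
  | insert f F hf ih =>
    obtain ⟨W, hFW, hWA, hW⟩ := ih fun f' hf' => hinter f' (mem_insert_of_mem hf')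
    obtain ⟨U, hfU, hUA, hU⟩ := hinter f (mem_insert_self f F)
    refine ⟨U ∪ W, ?_, disjoint_union_left.2 ⟨hUA, hWA⟩, ?_⟩
    · exact insert_subset (mem_union_left W hfU) (hFW.trans subset_union_right)
    · rw [sum_insert hf]
      linarith [hsub U W, hg (U ∩ W)]

/-- The exchange capacity of a nonnegative set function: the least value on a set containing `f`
but not `e`. -/
lemma exists_exchange_capacity {E : Type*} [Fintype E] [DecidableEq E] (g : Finset E → ℝ)
    (hg : ∀ U, 0 ≤ g U) :
    ∃ c : E → E → ℝ, (∀ e f, 0 ≤ c e f) ∧ (∀ e f U, f ∈ U → e ∉ U → c e f ≤ g U) ∧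
      ∀ e f, e ≠ f → ∃ U, f ∈ U ∧ e ∉ U ∧ g U ≤ c e f := by
  have h : ∀ e f, ∃ r : ℝ, 0 ≤ r ∧ (∀ U, f ∈ U → e ∉ U → r ≤ g U) ∧
      (e ≠ f → ∃ U, f ∈ U ∧ e ∉ U ∧ g U ≤ r) := by
    intro e f
    by_cases hef : e = f
    · exact ⟨0, le_rfl, fun U _ _ => hg U, fun h => absurd hef h⟩
    · obtain ⟨U, hU, hmin⟩ := exists_min_image
        (univ.filter fun U : Finset E => f ∈ U ∧ e ∉ U) g ⟨{f}, by simpa using hef⟩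
      have hU' := (mem_filter.1 hU).2
      exact ⟨g U, hg U, fun V h1 h2 => hmin V (by simp [h1, h2]),
        fun _ => ⟨U, hU'.1, hU'.2, le_rfl⟩⟩
  choose c h0 h1 h2 using h
  exact ⟨c, h0, h1, h2⟩

/-- A single exchange within the exchange capacity keeps a point in the base polytope. -/
lemma memBase_exchange {E : Type*} [Fintype E] [DecidableEq E] {ρ : Finset E → ℝ} {d : ℝ}
    {x : E → ℝ} (hx : memBase ρ d x) {e f : E} {r : ℝ} (hr : 0 ≤ r) (hre : r ≤ x e)
    (hrU : ∀ U : Finset E, f ∈ U → e ∉ U → r ≤ ρ U - ∑ i ∈ U, x i) :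
    memBase ρ d (fun e' => x e' +
      r * ((if e' = f then 1 else 0) - (if e' = e then 1 else 0))) := by
  obtain ⟨h0, hU, hd⟩ := hx
  have hsum : ∀ U : Finset E, ∑ e' ∈ U, (x e' +
      r * ((if e' = f then 1 else 0) - (if e' = e then 1 else 0)))
      = ∑ e' ∈ U, x e' + r * ((if f ∈ U then 1 else 0) - (if e ∈ U then 1 else 0)) := by
    intro U
    rw [sum_add_distrib, ← mul_sum, sum_sub_distrib, sum_ite_eq', sum_ite_eq']
  refine ⟨fun e' => ?_, fun U => ?_, ?_⟩
  · have := h0 e'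
    dsimp only
    split_ifs with h1 h2 h2
    · linarith
    · linarith
    · subst h2; linarith
    · linarith
  · rw [hsum]
    have := hU U
    split_ifs with h1 h2 h2
    · linarith
    · linarith [hrU U h1 h2]
    · linarith
    · linarith
  · rw [hsum]
    simpa using hd

/-- The transshipment existence fact (Lemma 3.2 of Timmermans–Harks 2017) used
in the proof of Theorem 1 of the paper: for any two points `x, y` of the same
base polytope `P_ρ(d)` there is a non-negative transshipment from
`E⁻ = {e : x_e > y_e}` to `E⁺ = {e : y_e > x_e}` satisfying all supplies and
demands whose individual flows are feasible single-pair exchanges. -/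
theorem stmt_7 {E : Type*} [Fintype E] [DecidableEq E]
    (ρ : Finset E → ℝ) (hρ : IsRank ρ) (d : ℝ) (hd : 0 < d)
    (x y : E → ℝ) (hx : memBase ρ d x) (hy : memBase ρ d y) :
    ∃ t : E → E → ℝ,
      (∀ e f, 0 ≤ t e f) ∧
      (∀ e ∈ Finset.univ.filter (fun e => y e < x e),
        ∑ f ∈ Finset.univ.filter (fun e' => x e' < y e'), t e f = x e - y e) ∧
      (∀ f ∈ Finset.univ.filter (fun e => x e < y e),
        ∑ e ∈ Finset.univ.filter (fun e' => y e' < x e'), t e f = y f - x f) ∧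
      (∀ e ∈ Finset.univ.filter (fun e' => y e' < x e'),
        ∀ f ∈ Finset.univ.filter (fun e' => x e' < y e'),
          memBase ρ d
            (fun e' => x e' +
              t e f * ((if e' = f then 1 else 0) - (if e' = e then 1 else 0)))) := by
  obtain ⟨hsub, -, hemp⟩ := hρ
  obtain ⟨-, hxρ, hxd⟩ := id hx
  obtain ⟨hy0, hyρ, hyd⟩ := hy
  let g : Finset E → ℝ := fun U => ρ U - ∑ e ∈ U, x e
  have hg : ∀ U, 0 ≤ g U := fun U => sub_nonneg.2 (hxρ U)
  have hgsub : ∀ U V, g (U ∪ V) + g (U ∩ V) ≤ g U + g V := by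
    intro U V
    simp only [g]
    linarith [hsub U V, sum_union_inter (s₁ := U) (s₂ := V) (f := x)]
  obtain ⟨c, hc0, hcU, hcA⟩ := exists_exchange_capacity g hg
  let a : E → ℝ := fun e => max (x e - y e) 0
  let b : E → ℝ := fun e => max (y e - x e) 0
  have ha : ∀ e, 0 ≤ a e := fun e => le_max_right _ _
  have hb : ∀ e, 0 ≤ b e := fun e => le_max_right _ _
  have hba : ∀ e, b e - a e = y e - x e := by
    intro e
    simp only [a, b]
    rcases le_total (x e) (y e) with h | h
    · rw [max_eq_left (by linarith), max_eq_right (by linarith)]; ring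
    · rw [max_eq_right (by linarith), max_eq_left (by linarith)]; ring
  have ha0 : ∀ e, ¬ y e < x e → a e = 0 := fun e h => max_eq_right (by linarith)
  have hb0 : ∀ e, ¬ x e < y e → b e = 0 := fun e h => max_eq_right (by linarith)
  have hbaU : ∀ U : Finset E, ∑ e ∈ U, b e - ∑ e ∈ U, a e = ∑ e ∈ U, y e - ∑ e ∈ U, x e := by
    intro U
    simp only [← sum_sub_distrib, hba]
  have hab : ∑ e, a e = ∑ e, b e := by linarith [hbaU univ]
  have hcut : ∀ A F : Finset E,
      ∑ j ∈ F, b j ≤ ∑ i ∈ Aᶜ, a i + ∑ i ∈ A, ∑ j ∈ F, c i j := by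
    intro A F
    set A' := A.filter fun e => y e < x e
    set F' := F.filter fun e => x e < y e
    have hF : ∑ j ∈ F', b j = ∑ j ∈ F, b j :=
      sum_filter_of_ne fun e _ he => not_not.1 fun h => he (hb0 e h)
    have hA : ∑ i ∈ A', a i = ∑ i ∈ A, a i :=
      sum_filter_of_ne fun e _ he => not_not.1 fun h => he (ha0 e h)
    have hAc := sum_add_sum_compl A a
    have hcle : ∑ i ∈ A', ∑ j ∈ F', c i j ≤ ∑ i ∈ A, ∑ j ∈ F, c i j :=
      (sum_le_sum fun i _ => sum_le_sum_of_subset_of_nonneg (filter_subset _ F)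
        fun j _ _ => hc0 i j).trans
      (sum_le_sum_of_subset_of_nonneg (filter_subset _ A)
        fun i _ _ => sum_nonneg fun j _ => hc0 i j)
    rcases A'.eq_empty_or_nonempty with hne | hne
    · rw [hne, sum_empty] at hA hcle
      have : ∑ j ∈ F, b j ≤ ∑ j, b j :=
        sum_le_sum_of_subset_of_nonneg (subset_univ F) fun j _ _ => hb j
      linarith
    · obtain ⟨W, hFW, hWA, hW⟩ := exists_separating_le_sum g hgsub hg (by simp [g, hemp]) c hne F'
        fun e he f hf => hcA e f fun h => by
          have h1 := (mem_filter.1 he).2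
          have h2 := (mem_filter.1 hf).2
          subst h
          linarith
      have h1 : ∑ j ∈ F', b j ≤ ∑ j ∈ W, b j :=
        sum_le_sum_of_subset_of_nonneg hFW fun j _ _ => hb j
      have h2 : ∑ i ∈ W, a i + ∑ i ∈ A', a i ≤ ∑ i, a i := by
        rw [← sum_union hWA]
        exact sum_le_sum_of_subset_of_nonneg (subset_univ _) fun i _ _ => ha i
      have h3 := hbaU W
      have h4 := hyρ W
      simp only [g] at hW
      linarith
  obtain ⟨t, ht0, htc, hrow, hcol⟩ := exists_transport_of_cut a b c ha hb hc0 hab hcut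
  have htrow : ∀ e f, t e f ≤ a e := fun e f =>
    hrow e ▸ single_le_sum (fun j _ => ht0 e j) (mem_univ f)
  have htcol : ∀ e f, t e f ≤ b f := fun e f =>
    hcol f ▸ single_le_sum (f := fun i => t i f) (fun i _ => ht0 i f) (mem_univ e)
  have hapos : ∀ e, y e < x e → a e = x e - y e := fun e h => max_eq_left (by linarith)
  have hbpos : ∀ e, x e < y e → b e = y e - x e := fun e h => max_eq_left (by linarith)
  refine ⟨t, ht0, fun e he => ?_, fun f hf => ?_, fun e he f hf => ?_⟩
  · rw [← hapos e (mem_filter.1 he).2, ← hrow e]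
    exact sum_filter_of_ne fun f _ hf => not_not.1 fun h =>
      hf (le_antisymm (hb0 f h ▸ htcol e f) (ht0 e f))
  · rw [← hbpos f (mem_filter.1 hf).2, ← hcol f]
    exact sum_filter_of_ne fun e _ he => not_not.1 fun h =>
      he (le_antisymm (ha0 e h ▸ htrow e f) (ht0 e f))
  · refine memBase_exchange hx (ht0 e f) ?_ fun U hf' he' => (htc e f).trans (hcU e f U hf' he')
    linarith [htrow e f, hapos e (mem_filter.1 he).2, hy0 e]
end

section
/- Let G be an atomic splittable polymatroid congestion game with m = |E| resources in which every cost function c_{i,e} and every derivative c'_{i,e} is L-Lipschitz, and set δ = max_{i ∈ N} d_i. Let k > 0 satisfy ρ_i(U)/k ∈ ℕ for all players i and all U ⊆ E, and d_i/k ∈ ℕ for all i. Then every exact equilibrium x of the k-integral game G_k is a (2·k·L·m²·δ·(δ+1))-approximate equilibrium of G; that is, π_i(y_i, x_{−i}) ≥ π_i(x) − 2kLm²δ(δ+1) for every player i and every y_i ∈ P_{ρ_i}(d_i). -/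
section

open Finset

theorem ConvexOn.tangent_le {f : ℝ → ℝ} (hf : ConvexOn ℝ Set.univ f) (hd : Differentiable ℝ f)
    (a b : ℝ) : f a + deriv f a * (b - a) ≤ f b := by
  rcases lt_trichotomy a b with h | h | h
  · have := hf.le_slope_of_hasDerivAt (Set.mem_univ a) (Set.mem_univ b) h (hd a).hasDerivAt
    rw [slope_def_field, le_div_iff₀ (by linarith)] at this
    linarith
  · simp [h]
  · have := hf.slope_le_of_hasDerivAt (Set.mem_univ b) (Set.mem_univ a) h (hd a).hasDerivAt
    rw [slope_def_field, div_le_iff₀ (by linarith)] at this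
    linarith

/-- Abel summation: a weighting whose sublevel sums for `G` below `M` are nonpositive pairs
nonpositively with `M - G`. -/
theorem sum_sub_mul_nonpos_of_sublevel {E : Type*} [DecidableEq E] (G w : E → ℝ) (s : Finset E) :
    ∀ M : ℝ, (∀ e ∈ s, G e ≤ M) → (∀ θ < M, ∑ e ∈ s with G e ≤ θ, w e ≤ 0) →
      ∑ e ∈ s, (M - G e) * w e ≤ 0 := by
  induction s using Finset.induction_on_max_value G with
  | empty => simp
  | insert a s ha hmax ih =>
    intro M hM hw
    have hs : ∑ e ∈ s, (G a - G e) * w e ≤ 0 := by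
      refine ih (G a) hmax fun θ hθ => ?_
      have := hw θ (hθ.trans_le (hM a (mem_insert_self a s)))
      rwa [filter_insert, if_neg (not_le.2 hθ)] at this
    have htop : (M - G a) * ∑ e ∈ insert a s, w e ≤ 0 := by
      rcases (hM a (mem_insert_self a s)).eq_or_lt with h | h
      · simp [h]
      · refine mul_nonpos_of_nonneg_of_nonpos (by linarith) ?_
        have := hw (G a) h
        rwa [filter_true_of_mem (by simpa using hmax)] at this
    have hsplit : ∑ e ∈ insert a s, (M - G e) * w e =
        (M - G a) * ∑ e ∈ insert a s, w e + ∑ e ∈ s, (G a - G e) * w e := by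
      rw [sum_insert ha, sum_insert ha, mul_add, mul_sum, add_assoc, ← sum_add_distrib]
      congr 1
      exact sum_congr rfl fun e _ => by ring
    linarith

section Exchange

variable {E : Type*} [Fintype E] [DecidableEq E] {ρ : Finset E → ℝ} {d k : ℝ} {x : E → ℝ}

/-- A set on which every base has at most the weight of `x`: one whose rank constraint is tight
at `x`, or the whole ground set. -/
def IsTight (ρ : Finset E → ℝ) (x : E → ℝ) (U : Finset E) : Prop :=
  ∑ e ∈ U, x e = ρ U ∨ U = univ

theorem IsTight.union_inter (hρ : IsRank ρ) (hx : memBase ρ d x) {U V : Finset E}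
    (hU : IsTight ρ x U) (hV : IsTight ρ x V) : IsTight ρ x (U ∪ V) ∧ IsTight ρ x (U ∩ V) := by
  rcases hU with hU | rfl
  · rcases hV with hV | rfl
    · have h₁ := hρ.1 U V
      have h₂ := hx.2.1 (U ∪ V)
      have h₃ := hx.2.1 (U ∩ V)
      have h₄ := sum_union_inter (s₁ := U) (s₂ := V) (f := x)
      exact ⟨.inl (by linarith), .inl (by linarith)⟩
    · simpa [IsTight] using Or.inl hU
  · simpa [IsTight] using hV

theorem IsTight.sum_le (hx : memBase ρ d x) {y : E → ℝ} (hy : memBase ρ d y) {U : Finset E}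
    (hU : IsTight ρ x U) : ∑ e ∈ U, y e ≤ ∑ e ∈ U, x e := by
  rcases hU with hU | rfl
  · exact hU ▸ hy.2.1 U
  · rw [hx.2.2, hy.2.2]

/-- `h` lies in every tight set containing `e`. -/
def InDep (ρ : Finset E → ℝ) (x : E → ℝ) (e h : E) : Prop :=
  ∀ U, IsTight ρ x U → e ∈ U → h ∈ U

/-- A nonempty set closed under dependence is a union of tight sets, hence tight. -/
theorem isTight_of_inDep_closed (hρ : IsRank ρ) (hx : memBase ρ d x) {S : Finset E}
    (hS : S.Nonempty) (hclosed : ∀ e ∈ S, ∀ h, InDep ρ x e h → h ∈ S) : IsTight ρ x S := by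
  classical
  let T : E → Finset E := fun e => (univ.filter fun U => IsTight ρ x U ∧ e ∈ U).inf id
  have hT : ∀ e, IsTight ρ x (T e) := fun e =>
    inf_induction (Or.inr rfl) (fun _ h₁ _ h₂ => (h₁.union_inter hρ hx h₂).2)
      fun U hU => (mem_filter.1 hU).2.1
  have hmem : ∀ e h, h ∈ T e ↔ InDep ρ x e h := by
    intro e h
    simp [T, Finset.mem_inf, InDep]
  have hST : S = S.sup' hS T := by
    ext h
    rw [mem_sup']
    exact ⟨fun hh => ⟨h, hh, (hmem h h).2 fun _ _ => id⟩,
      fun ⟨e, he, hh⟩ => hclosed e he h ((hmem e h).1 hh)⟩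
  rw [hST]
  exact sup'_induction hS T (fun _ h₁ _ h₂ => (h₁.union_inter hρ hx h₂).1) fun e _ => hT e

/-- Approximate local optimality of a base for a linear objective gives approximate global
optimality. -/
theorem linear_ge_of_inDep (hρ : IsRank ρ) (hx : memBase ρ d x) {g : E → ℝ} {η : ℝ}
    (hη : ∀ e h, InDep ρ x e h → 0 < x h → g h ≤ g e + η)
    {y : E → ℝ} (hy : memBase ρ d y) : -(η * d) ≤ ∑ e, g e * (y e - x e) := by
  classical
  have hself : ∀ h, InDep ρ x h h := fun _ _ _ => id
  let D : E → Finset E := fun h => univ.filter fun e => InDep ρ x e h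
  have hD : ∀ h, (D h).Nonempty := fun h => ⟨h, by simp [D, hself]⟩
  let G : E → ℝ := fun h => (D h).inf' (hD h) g
  have hGg : ∀ h, G h ≤ g h := fun h => inf'_le g (by simp [D, hself])
  have hgG : ∀ h, 0 < x h → g h ≤ G h + η := by
    intro h hh
    obtain ⟨e, he, hGe⟩ := exists_mem_eq_inf' (hD h) g
    have := hη e h (by simpa [D] using he) hh
    simp only [G, hGe]
    exact this
  have hGanti : ∀ e h, InDep ρ x e h → G h ≤ G e := by
    intro e h heh
    refine le_inf' _ _ fun e' he' => inf'_le g ?_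
    have he'' : InDep ρ x e' e := by simpa [D] using he'
    exact mem_filter.2 ⟨mem_univ _, fun U hU heU => heh U hU (he'' U hU heU)⟩
  have hsub : ∀ θ, ∑ e with G e ≤ θ, (y e - x e) ≤ 0 := by
    intro θ
    rcases (univ.filter fun e => G e ≤ θ).eq_empty_or_nonempty with hS | hS
    · simp [hS]
    · have ht := isTight_of_inDep_closed hρ hx hS fun e he h heh => by
        simp only [mem_filter, mem_univ, true_and] at he ⊢
        exact (hGanti e h heh).trans he
      rw [sum_sub_distrib]
      linarith [ht.sum_le hx hy]
  have hG : 0 ≤ ∑ e, G e * (y e - x e) := by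
    have h := sum_sub_mul_nonpos_of_sublevel G (fun e => y e - x e) univ (∑ e, |G e|)
      (fun e he => (le_abs_self _).trans
        (single_le_sum (f := fun e => |G e|) (fun _ _ => abs_nonneg _) he))
      fun θ _ => hsub θ
    simp only [sub_mul, sum_sub_distrib, ← mul_sum] at h
    rw [hx.2.2, hy.2.2] at h
    linarith
  have hdiff : ∑ e, (G e * (y e - x e) - η * x e) ≤ ∑ e, g e * (y e - x e) := by
    refine sum_le_sum fun e _ => ?_
    have h₁ : 0 ≤ (g e - G e) * y e := mul_nonneg (sub_nonneg.2 (hGg e)) (hy.1 e)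
    rcases (hx.1 e).eq_or_lt with h | h
    · rw [← h]; linarith
    · have h₂ := mul_le_mul_of_nonneg_right (hgG e h) h.le
      linarith
  rw [sum_sub_distrib, ← mul_sum, hx.2.2] at hdiff
  linarith

/-- Moving one unit `k` from `h` to `e` keeps a `k`-integral base feasible when `h` lies in every
tight set containing `e` and carries positive weight. -/
theorem memKBase_exchange_s9 (hk : 0 < k) (hρk : ∀ U, ∃ q : ℕ, ρ U = k * q) (hx : memKBase ρ d k x)
    {e h : E} (hne : e ≠ h) (hdep : InDep ρ x e h) (hpos : 0 < x h) :
    memKBase ρ d k (Function.update (Function.update x h (x h - k)) e (x e + k)) := by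
  set z := Function.update (Function.update x h (x h - k)) e (x e + k) with hz
  obtain ⟨hxb, hxq⟩ := hx
  choose q hq using hxq
  have hze : ∀ a, z a = x a + ((if a = e then k else 0) - if a = h then k else 0) := by
    intro a
    by_cases h₁ : a = e
    · subst h₁; simp [hz, hne]
    · by_cases h₂ : a = h
      · subst h₂; simp [hz, h₁, sub_eq_add_neg]
      · simp [hz, h₁, h₂]
  have hsum : ∀ U : Finset E, ∑ a ∈ U, z a =
      ∑ a ∈ U, x a + ((if e ∈ U then k else 0) - if h ∈ U then k else 0) := by
    intro U
    simp only [hze, sum_add_distrib, sum_sub_distrib, sum_ite_eq']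
  have hqpos : 1 ≤ q h := by
    rcases Nat.eq_zero_or_pos (q h) with h0 | h0
    · rw [hq h, h0] at hpos; simp at hpos
    · exact h0
  have hint : ∀ a, ∃ p : ℕ, z a = k * p := by
    intro a
    by_cases h₁ : a = e
    · exact ⟨q a + 1, by subst h₁; rw [hze, hq a]; simp [hne]; ring⟩
    · by_cases h₂ : a = h
      · subst h₂
        refine ⟨q a - 1, ?_⟩
        rw [hze, hq a, Nat.cast_sub hqpos]
        simp [h₁]; ring
      · exact ⟨q a, by rw [hze, hq a]; simp [h₁, h₂]⟩
  refine ⟨⟨fun a => ?_, fun U => ?_, ?_⟩, hint⟩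
  · obtain ⟨p, hp⟩ := hint a
    rw [hp]; positivity
  · rw [hsum]
    have hU := hxb.2.1 U
    by_cases heU : e ∈ U
    · by_cases hhU : h ∈ U
      · simpa [heU, hhU] using hU
      · have hlt : ∑ a ∈ U, x a < ρ U :=
          lt_of_le_of_ne hU fun ht => hhU (hdep U (.inl ht) heU)
        obtain ⟨r, hr⟩ := hρk U
        have hxU : ∑ a ∈ U, x a = k * ((∑ a ∈ U, q a : ℕ) : ℝ) := by
          push_cast
          rw [mul_sum]
          exact sum_congr rfl fun a _ => hq a
        rw [hr, hxU] at hlt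
        have hlt' : (∑ a ∈ U, q a) + 1 ≤ r := by exact_mod_cast lt_of_mul_lt_mul_left hlt hk.le
        have hle : (((∑ a ∈ U, q a : ℕ) : ℝ) + 1) ≤ r := by exact_mod_cast hlt'
        have := mul_le_mul_of_nonneg_left hle hk.le
        simp only [heU, hhU, if_true, if_false]
        rw [hr, hxU]
        linarith
    · by_cases hhU : h ∈ U <;> simp [heU, hhU] <;> linarith
  · rw [hsum]
    simp [hxb.2.2]

end Exchange

section MarginalCost

variable {c : ℝ → ℝ} {L k A t : ℝ}

theorem deriv_le_of_lipschitz (hdiff : Differentiable ℝ c) (hconv : ConvexOn ℝ Set.univ c)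
    (hlip : ∀ x y, |c y - c x| ≤ L * |y - x|) (a : ℝ) : deriv c a ≤ L := by
  have h₁ := hconv.tangent_le hdiff a (a + 1)
  have h₂ := (le_abs_self _).trans (hlip a (a + 1))
  simp only [add_sub_cancel_left, abs_one] at h₁ h₂
  linarith

/-- The cost increase from adding `k` units, compared with the marginal cost. -/
theorem cost_add_le (hdiff : Differentiable ℝ c) (hconv : ConvexOn ℝ Set.univ c)
    (hlip : ∀ x y, |c y - c x| ≤ L * |y - x|)
    (hlip' : ∀ x y, |deriv c y - deriv c x| ≤ L * |y - x|) (hk : 0 < k) (ht : 0 ≤ t) :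
    c (A + k) * (t + k) - c A * t ≤ k * (c A + t * deriv c A) + L * k ^ 2 * (t + 1) := by
  have h₁ := hconv.tangent_le hdiff (A + k) A
  have h₂ := (le_abs_self _).trans (hlip' A (A + k))
  have h₃ := (le_abs_self _).trans (hlip A (A + k))
  rw [add_sub_cancel_left, abs_of_pos hk] at h₂ h₃
  have h₄ : c (A + k) - c A ≤ k * (deriv c A + L * k) := by nlinarith
  have h₅ := mul_le_mul_of_nonneg_right h₄ ht
  have h₆ := mul_le_mul_of_nonneg_right h₃ hk.le
  nlinarith

/-- The cost decrease from removing `k` units, compared with the marginal cost. -/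
theorem le_cost_sub (hdiff : Differentiable ℝ c) (hconv : ConvexOn ℝ Set.univ c)
    (hlip : ∀ x y, |c y - c x| ≤ L * |y - x|)
    (hlip' : ∀ x y, |deriv c y - deriv c x| ≤ L * |y - x|) (hL : 0 ≤ L) (hk : 0 < k)
    (ht : k ≤ t) :
    k * (c A + t * deriv c A) - L * k ^ 2 * (t + 1) ≤ c A * t - c (A - k) * (t - k) := by
  have h₁ := hconv.tangent_le hdiff (A - k) A
  have h₂ := (le_abs_self _).trans (hlip' (A - k) A)
  rw [sub_sub_cancel, abs_of_pos hk] at h₂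
  have h₃ := deriv_le_of_lipschitz hdiff hconv hlip A
  have h₄ : k * (deriv c A - L * k) ≤ c A - c (A - k) := by nlinarith
  have h₅ := mul_le_mul_of_nonneg_right h₄ (sub_nonneg.2 ht)
  have h₆ := mul_le_mul_of_nonneg_left h₃ (sq_nonneg k)
  have h₇ : 0 ≤ L * k ^ 3 := by positivity
  nlinarith

end MarginalCost

/-- A `k`-integral best response is an approximate best response in the whole base polytope. -/
theorem approx_best_response {E : Type*} [Fintype E] [DecidableEq E] {ρ : Finset E → ℝ}
    (hρ : IsRank ρ) {d : ℝ} {c : E → ℝ → ℝ} (hcmono : ∀ e, Monotone (c e))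
    (hcdiff : ∀ e, Differentiable ℝ (c e)) (hcconv : ∀ e, ConvexOn ℝ Set.univ (c e))
    {L : ℝ} (hL : 0 ≤ L) (hlip : ∀ e x y, |c e y - c e x| ≤ L * |y - x|)
    (hlip' : ∀ e x y, |deriv (c e) y - deriv (c e) x| ≤ L * |y - x|)
    {k : ℝ} (hk : 0 < k) (hρk : ∀ U, ∃ q : ℕ, ρ U = k * q)
    {x A : E → ℝ} (hx : memKBase ρ d k x)
    (hopt : ∀ z, memKBase ρ d k z →
      ∑ e, c e (A e) * x e ≤ ∑ e, c e (A e + (z e - x e)) * z e)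
    {y : E → ℝ} (hy : memBase ρ d y) :
    ∑ e, c e (A e) * x e - 2 * L * k * (d + 1) * d ≤ ∑ e, c e (A e + (y e - x e)) * y e := by
  have hxd : ∀ e, x e ≤ d := fun e => hx.1.2.2 ▸ single_le_sum (fun a _ => hx.1.1 a) (mem_univ e)
  have hlin := linear_ge_of_inDep (g := fun e => c e (A e) + x e * deriv (c e) (A e))
    (η := 2 * L * k * (d + 1)) hρ hx.1 (fun e h hdep hpos => ?_) hy
  · have htangent : ∑ e, (c e (A e) * x e +
        (c e (A e) + x e * deriv (c e) (A e)) * (y e - x e)) ≤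
        ∑ e, c e (A e + (y e - x e)) * y e := by
      refine sum_le_sum fun e _ => ?_
      have h₁ := mul_le_mul_of_nonneg_right
        ((hcconv e).tangent_le (hcdiff e) (A e) (A e + (y e - x e))) (hy.1 e)
      have h₂ : 0 ≤ deriv (c e) (A e) * (y e - x e) ^ 2 :=
        mul_nonneg (hcmono e).deriv_nonneg (sq_nonneg _)
      nlinarith
    rw [sum_add_distrib] at htangent
    linarith
  · have hd : 0 ≤ d := (hx.1.1 h).trans (hxd h)
    rcases eq_or_ne e h with rfl | hne
    · have : 0 ≤ 2 * L * k * (d + 1) := by positivity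
      linarith
    · have hkh : k ≤ x h := by
        obtain ⟨q, hq⟩ := hx.2 h
        have hq0 : q ≠ 0 := by rintro rfl; simp [hq] at hpos
        rw [hq]
        exact le_mul_of_one_le_right hk.le (by exact_mod_cast Nat.one_le_iff_ne_zero.2 hq0)
      have hz := hopt _ (memKBase_exchange_s9 hk hρk hx hne hdep hpos)
      rw [← sub_nonneg, ← sum_sub_distrib, ← sum_subset (subset_univ {e, h}) ?_,
        sum_pair hne] at hz
      · simp only [Function.update_self, Function.update_of_ne hne.symm, add_sub_cancel_left,
          sub_sub_cancel_left, ← sub_eq_add_neg] at hz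
        have h₁ := cost_add_le (A := A e) (hcdiff e) (hcconv e) (hlip e) (hlip' e) hk (hx.1.1 e)
        have h₂ := le_cost_sub (A := A h) (hcdiff h) (hcconv h) (hlip h) (hlip' h) hL hk hkh
        have h₃ : L * k ^ 2 * (x e + 1) ≤ L * k ^ 2 * (d + 1) := by gcongr; exact hxd e
        have h₄ : L * k ^ 2 * (x h + 1) ≤ L * k ^ 2 * (d + 1) := by gcongr; exact hxd h
        refine le_of_mul_le_mul_left ?_ hk
        linarith
      · intro a _ ha
        simp only [mem_insert, mem_singleton, not_or] at ha
        simp [ha.1, ha.2]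

end

/-- The quantitative core of Theorem 1 of the paper: in an atomic splittable
polymatroid congestion game with `L`-Lipschitz costs and derivatives, with
`δ = max_i d_i` and `m = |E|`, every exact equilibrium of the `k`-integral game
`G_k` is a `2kLm²δ(δ+1)`-approximate equilibrium of `G`. -/
theorem stmt_9 {N E : Type*} [Fintype N] [Nonempty N] [DecidableEq N]
    [Fintype E] [DecidableEq E]
    (ρ : N → Finset E → ℝ) (hρ : ∀ i, IsRank (ρ i))
    (d : N → ℝ) (hd : ∀ i, 0 < d i) (hdρ : ∀ i, d i ≤ ρ i Finset.univ)
    (c : N → E → ℝ → ℝ)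
    (hcnonneg : ∀ i e t, 0 ≤ c i e t)
    (hcmono : ∀ i e, Monotone (c i e))
    (hcdiff : ∀ i e, Differentiable ℝ (c i e))
    (hcconv : ∀ i e, ConvexOn ℝ Set.univ (c i e))
    (L : ℝ) (hL : 0 < L)
    (hlip : ∀ i e x y, |c i e y - c i e x| ≤ L * |y - x|)
    (hlip' : ∀ i e x y, |deriv (c i e) y - deriv (c i e) x| ≤ L * |y - x|)
    (δ : ℝ) (hδ : IsGreatest (Set.range d) δ)
    (k : ℝ) (hk : 0 < k)
    (hρk : ∀ i U, ∃ q : ℕ, ρ i U = k * q)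
    (hdk : ∀ i, ∃ q : ℕ, d i = k * q)
    (x : N → E → ℝ) (hx : ∀ i, memKBase (ρ i) (d i) k (x i))
    (heq : ∀ i yi, memKBase (ρ i) (d i) k yi →
      ∑ e, c i e (∑ j, Function.update x i yi j e) * yi e ≥
        ∑ e, c i e (∑ j, x j e) * x i e) :
    ∀ i yi, memBase (ρ i) (d i) yi →
      ∑ e, c i e (∑ j, Function.update x i yi j e) * yi e ≥
        ∑ e, c i e (∑ j, x j e) * x i e -
          2 * k * L * (Fintype.card E : ℝ) ^ 2 * δ * (δ + 1) := by
  intro i yi hyi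
  have hagg : ∀ z : E → ℝ, ∀ e,
      ∑ j, Function.update x i z j e = ∑ j, x j e + (z e - x i e) := by
    intro z e
    rw [← Finset.add_sum_erase _ _ (Finset.mem_univ i),
      ← Finset.add_sum_erase _ (fun j => x j e) (Finset.mem_univ i),
      Finset.sum_congr rfl fun j hj => by
        rw [Function.update_of_ne (Finset.ne_of_mem_erase hj)], Function.update_self]
    ring
  have hopt := heq i
  simp only [hagg, ge_iff_le] at hopt ⊢
  have hmain := approx_best_response (hρ i) (hcmono i) (hcdiff i) (hcconv i) hL.le (hlip i)
    (hlip' i) hk (hρk i) (hx i) hopt hyi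
  have hdδ : d i ≤ δ := hδ.2 ⟨i, rfl⟩
  have hdi := hd i
  have hδpos : 0 < δ := hdi.trans_le hdδ
  have hm : (1 : ℝ) ≤ (Fintype.card E : ℝ) ^ 2 := by
    have hE : Nonempty E := by
      by_contra hE
      rw [not_nonempty_iff] at hE
      have := (hx i).1.2.2
      rw [Finset.univ_eq_empty, Finset.sum_empty] at this
      linarith
    exact one_le_pow₀ (by exact_mod_cast Fintype.card_pos)
  have hbound : 2 * L * k * (d i + 1) * d i ≤
      2 * k * L * (Fintype.card E : ℝ) ^ 2 * δ * (δ + 1) :=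
    calc 2 * L * k * (d i + 1) * d i ≤ 2 * L * k * (δ + 1) * δ := by gcongr
      _ = 2 * L * k * (δ + 1) * δ * 1 := by ring
      _ ≤ 2 * L * k * (δ + 1) * δ * (Fintype.card E : ℝ) ^ 2 := by
        gcongr
      _ = _ := by ring
  linarith
end

section
/- Let M be a multimarket oligopoly with firms N = {1,…,n}, markets E, market access sets E_i ⊆ E, price functions p_{i,e} : ℝ → ℝ, and production costs C_i(t) = c_i·t² with c_i ≥ 0. Fix reals d_i > 0 for each firm, introduce n pairwise distinct new resources e_1,…,e_n (disjoint from E), and define for each firm i the resource set Ẽ_i = E_i ∪ {e_i}, cost functions c_{i,e}(t) = −p_{i,e}(t) for e ∈ E_i and c_{i,e_i}(t) = c_i·(t − 2d_i), and the map φ_i(x_i) = (x_i, d_i − Σ_{e∈E_i} x_{i,e}). Then for every strategy profile x = (x_i)_{i∈N} with x_i ∈ ℝ^{E_i}_{≥0}, and for every firm i: u_i(x) = −π_i(φ_1(x_1),…,φ_n(x_n)) − c_i·d_i², where π_i(x') = Σ_{e∈Ẽ_i} c_{i,e}(x'_e)·x'_{i,e} and x'_e denotes the total load of all players on resource e (in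 particular x'_{e_i} = x'_{i,e_i} since only player i uses e_i, and x'_e = x_e for e ∈ E). -/
open Finset

/-- Total quantity offered on market `e`: the sum of the productions of all
firms having access to `e`. -/
noncomputable def marketLoad {N E : Type*} [Fintype N] [DecidableEq E]
    (Emkt : N → Finset E) (x : N → E → ℝ) (e : E) : ℝ :=
  ∑ i ∈ Finset.univ.filter (fun i => e ∈ Emkt i), x i e

/-- Utility of firm `i` in the multimarket oligopoly with quadratic production
costs `C_i(t) = c_i t²`. -/
noncomputable def cournotUtil {N E : Type*} [Fintype N] [DecidableEq E]
    (Emkt : N → Finset E) (p : N → E → ℝ → ℝ) (cc : N → ℝ)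
    (x : N → E → ℝ) (i : N) : ℝ :=
  ∑ e ∈ Emkt i, p i e (marketLoad Emkt x e) * x i e -
    cc i * (∑ e ∈ Emkt i, x i e) ^ 2

/-- The transformation `φ_i(x_i) = (x_i, d_i − Σ_{e∈E_i} x_{i,e})` of a Cournot
strategy into a strategy on the extended resource set `E ⊕ N`, where `Sum.inr i`
is the firm-specific extra resource `e_i`. -/
noncomputable def cournotPhi {N E : Type*} [Fintype E] [DecidableEq E] [DecidableEq N]
    (Emkt : N → Finset E) (d : N → ℝ) (x : N → E → ℝ) :
    N → (E ⊕ N) → ℝ :=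
  fun i r =>
    match r with
    | Sum.inl e => x i e
    | Sum.inr j => if j = i then d i - ∑ e ∈ Emkt i, x i e else 0

/-- Player-specific cost functions of the constructed atomic splittable game:
`c_{i,e}(t) = −p_{i,e}(t)` on the markets and `c_{i,e_i}(t) = c_i (t − 2 d_i)`
on the extra resource of firm `i`. -/
def cournotCost {N E : Type*} (p : N → E → ℝ → ℝ) (cc : N → ℝ) (d : N → ℝ) :
    N → (E ⊕ N) → ℝ → ℝ :=
  fun i r t =>
    match r with
    | Sum.inl e => -(p i e t)
    | Sum.inr _ => cc i * (t - 2 * d i)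

/-- The allowable resource set `Ẽ_i = E_i ∪ {e_i}` of player `i`. -/
def cournotResources {N E : Type*} [DecidableEq E] [DecidableEq N]
    (Emkt : N → Finset E) (i : N) : Finset (E ⊕ N) :=
  (Emkt i).image Sum.inl ∪ {Sum.inr i}

/-- Cost `π_i` of player `i` in the constructed atomic splittable game. -/
noncomputable def cournotPi {N E : Type*} [Fintype N] [Fintype E]
    [DecidableEq E] [DecidableEq N]
    (Emkt : N → Finset E) (p : N → E → ℝ → ℝ) (cc : N → ℝ) (d : N → ℝ)
    (y : N → (E ⊕ N) → ℝ) (i : N) : ℝ :=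
  ∑ r ∈ cournotResources Emkt i, cournotCost p cc d i r (∑ j, y j r) * y i r

/-- On a market, the total load over all players is the market load, since firms without
access produce nothing there. -/
lemma sum_cournotPhi_inl {N E : Type*} [Fintype N] [Fintype E] [DecidableEq E] [DecidableEq N]
    (Emkt : N → Finset E) (d : N → ℝ) (x : N → E → ℝ)
    (hxs : ∀ i e, e ∉ Emkt i → x i e = 0) (e : E) :
    ∑ j, cournotPhi Emkt d x j (Sum.inl e) = marketLoad Emkt x e := by
  simp only [cournotPhi, marketLoad, Finset.sum_filter]
  refine Finset.sum_congr rfl fun j _ => ?_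
  split_ifs with h
  · rfl
  · exact hxs j e h

/-- Only player `i` puts load on the extra resource of firm `i`. -/
lemma sum_cournotPhi_inr {N E : Type*} [Fintype N] [Fintype E] [DecidableEq E] [DecidableEq N]
    (Emkt : N → Finset E) (d : N → ℝ) (x : N → E → ℝ) (i : N) :
    ∑ j, cournotPhi Emkt d x j (Sum.inr i) = d i - ∑ e ∈ Emkt i, x i e := by
  simp [cournotPhi]

/-- The computational core of Theorem 2 of the paper: for every strategy
profile of the multimarket oligopoly, the utility of firm `i` equals the
negated cost of player `i` in the constructed atomic splittable singleton
congestion game minus the constant `c_i d_i²`. -/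
theorem stmt_11 {N E : Type*} [Fintype N] [Fintype E] [DecidableEq E] [DecidableEq N]
    (Emkt : N → Finset E)
    (p : N → E → ℝ → ℝ)
    (cc : N → ℝ) (hcc : ∀ i, 0 ≤ cc i)
    (d : N → ℝ) (hd : ∀ i, 0 < d i)
    (x : N → E → ℝ)
    (hx0 : ∀ i e, 0 ≤ x i e)
    (hxs : ∀ i e, e ∉ Emkt i → x i e = 0)
    (i : N) :
    cournotUtil Emkt p cc x i =
      -(cournotPi Emkt p cc d (cournotPhi Emkt d x) i) - cc i * (d i) ^ 2 := by
  have hdisj : Disjoint ((Emkt i).image (Sum.inl : E → E ⊕ N)) {Sum.inr i} := by simp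
  rw [cournotPi, cournotResources, Finset.sum_union hdisj,
    Finset.sum_image Sum.inl_injective.injOn, Finset.sum_singleton, sum_cournotPhi_inr]
  simp only [sum_cournotPhi_inl Emkt d x hxs]
  simp only [cournotUtil, cournotCost, cournotPhi, if_true, neg_mul, Finset.sum_neg_distrib]
  ring
end

section
/- Let M be a multimarket oligopoly with price functions p_{i,e} and quadratic production costs C_i(t) = c_i·t², c_i ≥ 0, and let d_i > 0 be such that the strategy set of firm i is restricted to X_i = {x_i ∈ ℝ^{E_i}_{≥0} : Σ_{e∈E_i} x_{i,e} ≤ d_i}. Construct the game G as follows: introduce pairwise distinct new resources e_1,…,e_n, set Ẽ_i = E_i ∪ {e_i}, costs c_{i,e}(t) = −p_{i,e}(t) for e ∈ E_i and c_{i,e_i}(t) = c_i·(t − 2d_i), strategy sets Y_i = {y_i ∈ ℝ^{Ẽ_i}_{≥0} : Σ_{e∈Ẽ_i} y_{i,e} = d_i}, player costs π_i(y) = Σ_{e∈Ẽ_i} c_{i,e}(y_e)·y_{i,e} where y_e is the total load on resource e, and φ_i(x_i) = (x_i, d_i − Σ_{e∈E_i} x_{i,e}). Then for every ε ≥ 0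 and every profile x ∈ Π_i X_i: x is an ε-approximate Cournot equilibrium of M — meaning u_i(x'_i, x_{−i}) ≤ u_i(x) + ε for every firm i and every x'_i ∈ X_i — if and only if (φ_1(x_1),…,φ_n(x_n)) is an ε-approximate equilibrium of G — meaning π_i(y'_i, φ(x)_{−i}) ≥ π_i(φ(x)) − ε for every i and every y'_i ∈ Y_i. -/
open Finset

/-- A sum over `Ẽ_i` splits into the markets of `i` and its extra resource. -/
theorem sum_cournotResources {N E : Type*} [DecidableEq E] [DecidableEq N]
    (Emkt : N → Finset E) (i : N) (f : E ⊕ N → ℝ) :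
    ∑ r ∈ cournotResources Emkt i, f r = ∑ e ∈ Emkt i, f (Sum.inl e) + f (Sum.inr i) := by
  rw [cournotResources, Finset.sum_union (by simp), Finset.sum_singleton,
    Finset.sum_image Sum.inl_injective.injOn]

/-- For a profile supported on the accessible markets, the market load is the full sum. -/
theorem marketLoad_eq_sum {N E : Type*} [Fintype N] [DecidableEq E]
    (Emkt : N → Finset E) (x : N → E → ℝ) (hxs : ∀ i e, e ∉ Emkt i → x i e = 0) (e : E) :
    marketLoad Emkt x e = ∑ j, x j e := by
  rw [marketLoad, Finset.sum_filter]
  refine Finset.sum_congr rfl fun j _ => ?_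
  split_ifs with h
  · rfl
  · exact (hxs j e h).symm

/-- Up to the constant `c_i d_i²`, the transformation `φ` turns utility into negative cost. -/
theorem cournotPi_cournotPhi {N E : Type*} [Fintype N] [Fintype E] [DecidableEq E]
    [DecidableEq N] (Emkt : N → Finset E) (p : N → E → ℝ → ℝ) (cc d : N → ℝ)
    (x : N → E → ℝ) (hxs : ∀ i e, e ∉ Emkt i → x i e = 0) (i : N) :
    cournotPi Emkt p cc d (cournotPhi Emkt d x) i =
      -cournotUtil Emkt p cc x i - cc i * d i ^ 2 := by
  simp only [cournotPi, cournotUtil, sum_cournotResources, cournotCost, cournotPhi,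
    marketLoad_eq_sum Emkt x hxs, neg_mul, Finset.sum_neg_distrib, Finset.sum_ite_eq,
    Finset.mem_univ, if_true]
  ring

/-- Updating a strategy commutes with `φ`: a feasible strategy of player `i` in the constructed
game is the image of its restriction to the markets. -/
theorem update_cournotPhi {N E : Type*} [Fintype E] [DecidableEq E] [DecidableEq N]
    (Emkt : N → Finset E) (d : N → ℝ) (x : N → E → ℝ) (i : N) (y : E ⊕ N → ℝ)
    (hys : ∀ r, r ∉ cournotResources Emkt i → y r = 0)
    (hyd : ∑ r ∈ cournotResources Emkt i, y r = d i) :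
    Function.update (cournotPhi Emkt d x) i y =
      cournotPhi Emkt d (Function.update x i (y ∘ Sum.inl)) := by
  rw [sum_cournotResources] at hyd
  funext j r
  rcases eq_or_ne j i with rfl | hj
  · rcases r with e | k
    · simp [cournotPhi]
    · rcases eq_or_ne k j with rfl | hk
      · simp [cournotPhi, ← hyd]
      · simpa [cournotPhi, hk] using hys (Sum.inr k) (by simp [cournotResources, hk])
  · rcases r with e | k <;> simp [cournotPhi, hj]

/-- Replacing one strategy by one supported on the accessible markets keeps the support. -/
theorem update_eq_zero_of_notMem {N E : Type*} [DecidableEq N]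
    (Emkt : N → Finset E) (x : N → E → ℝ) (hxs : ∀ i e, e ∉ Emkt i → x i e = 0)
    (i : N) (z : E → ℝ) (hz : ∀ e, e ∉ Emkt i → z e = 0) (j : N) (e : E)
    (he : e ∉ Emkt j) : Function.update x i z j e = 0 := by
  rcases eq_or_ne j i with rfl | hj
  · simpa using hz e he
  · simpa [hj] using hxs j e he

/-- ε-approximate equilibrium correspondence of Theorem 2 of the paper:
a profile `x` (with non-negative productions supported on `E_i` and total
production at most `d_i`) is an ε-approximate Cournot equilibrium of the
multimarket oligopoly iff its image `(φ_i(x_i))_i` is an ε-approximate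
equilibrium of the constructed atomic splittable singleton congestion game. -/
theorem stmt_14 {N E : Type*} [Fintype N] [Fintype E] [DecidableEq E] [DecidableEq N]
    (Emkt : N → Finset E)
    (p : N → E → ℝ → ℝ)
    (cc : N → ℝ) (hcc : ∀ i, 0 ≤ cc i)
    (d : N → ℝ) (hd : ∀ i, 0 < d i)
    (ε : ℝ) (hε : 0 ≤ ε)
    (x : N → E → ℝ)
    (hx0 : ∀ i e, 0 ≤ x i e)
    (hxs : ∀ i e, e ∉ Emkt i → x i e = 0)
    (hxd : ∀ i, ∑ e ∈ Emkt i, x i e ≤ d i) :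
    (∀ i (xi' : E → ℝ), (∀ e, 0 ≤ xi' e) → (∀ e, e ∉ Emkt i → xi' e = 0) →
        (∑ e ∈ Emkt i, xi' e ≤ d i) →
        cournotUtil Emkt p cc (Function.update x i xi') i ≤
          cournotUtil Emkt p cc x i + ε) ↔
      (∀ i (yi' : (E ⊕ N) → ℝ), (∀ r, 0 ≤ yi' r) →
        (∀ r, r ∉ cournotResources Emkt i → yi' r = 0) →
        (∑ r ∈ cournotResources Emkt i, yi' r = d i) →
        cournotPi Emkt p cc d (Function.update (cournotPhi Emkt d x) i yi') i ≥
          cournotPi Emkt p cc d (cournotPhi Emkt d x) i - ε) := by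
  constructor
  · intro h i y hy0 hys hyd
    have hzs : ∀ e, e ∉ Emkt i → (y ∘ Sum.inl) e = 0 := fun e he =>
      hys (Sum.inl e) (by simp [cournotResources, he])
    have hzd : ∑ e ∈ Emkt i, (y ∘ Sum.inl) e ≤ d i := by
      rw [← hyd, sum_cournotResources]
      exact le_add_of_nonneg_right (hy0 _)
    have hu := h i (y ∘ Sum.inl) (fun e => hy0 _) hzs hzd
    rw [update_cournotPhi Emkt d x i y hys hyd, cournotPi_cournotPhi _ _ _ _ _ hxs,
      cournotPi_cournotPhi _ _ _ _ _ (update_eq_zero_of_notMem Emkt x hxs i _ hzs)]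
    linarith
  · intro h i z hz0 hzs hzd
    let y : E ⊕ N → ℝ :=
      Sum.elim z fun j => if j = i then d i - ∑ e ∈ Emkt i, z e else 0
    have hy0 : ∀ r, 0 ≤ y r := by
      rintro (e | j)
      · exact hz0 e
      · change 0 ≤ if j = i then d i - ∑ e ∈ Emkt i, z e else 0
        split_ifs
        · exact sub_nonneg.2 hzd
        · exact le_rfl
    have hys : ∀ r, r ∉ cournotResources Emkt i → y r = 0 := by
      rintro (e | j) hr
      · exact hzs e (by simpa [cournotResources] using hr)
      · exact if_neg (by simpa [cournotResources] using hr)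
    have hyd : ∑ r ∈ cournotResources Emkt i, y r = d i := by
      simp [sum_cournotResources, y]
    have hp := h i y hy0 hys hyd
    rw [update_cournotPhi Emkt d x i y hys hyd, cournotPi_cournotPhi _ _ _ _ _ hxs,
      show y ∘ Sum.inl = z from rfl,
      cournotPi_cournotPhi _ _ _ _ _ (update_eq_zero_of_notMem Emkt x hxs i _ hzs)] at hp
    linarith
end

section
/- Let G be an atomic splittable polymatroid congestion game in which every cost function c_{i,e} and every derivative c'_{i,e} is L-Lipschitz, let k > 0 with d_i/k ∈ ℕ for all i, and let x be any feasible strategy profile of the k-integral game G_k. Then for every player i and every resource e: μ^{+k}_{i,e}(x)/k ≤ μ_{i,e}(x) + k·L·(d_i + 1), and if x_{i,e} > 0 also μ^{−k}_{i,e}(x)/k ≥ μ_{i,e}(x) − k·L·(d_i + 1). -/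
/-- The difference quotient of a function with `L`-Lipschitz derivative is within `L * (b - a)`
of the derivative at any point of the interval. -/
theorem abs_sub_sub_mul_deriv_le {f : ℝ → ℝ} (hf : Differentiable ℝ f) {L : ℝ} (hL : 0 ≤ L)
    (hlip : ∀ x y, |deriv f y - deriv f x| ≤ L * |y - x|) {a b t : ℝ} (hab : a < b)
    (ht : t ∈ Set.Icc a b) :
    |f b - f a - (b - a) * deriv f t| ≤ (b - a) * (L * (b - a)) := by
  obtain ⟨z, hz, hslope⟩ :=
    exists_deriv_eq_slope f hab hf.continuous.continuousOn hf.differentiableOn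
  have hpos : 0 < b - a := sub_pos.mpr hab
  have hdiff : f b - f a = (b - a) * deriv f z := by
    rw [hslope]
    field_simp
  rw [hdiff, ← mul_sub, abs_mul, abs_of_pos hpos]
  have hzt : |z - t| ≤ b - a := by
    rw [abs_le]
    constructor <;> linarith [hz.1, hz.2, ht.1, ht.2]
  exact mul_le_mul_of_nonneg_left
    ((hlip t z).trans (mul_le_mul_of_nonneg_left hzt hL)) hpos.le

/-- Lemma 2 of the paper in game form: for any feasible profile `x` of the
`k`-integral game, `μ^{+k}_{i,e}(x)/k ≤ μ_{i,e}(x) + kL(d_i+1)`, and if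
`x_{i,e} > 0` also `μ^{−k}_{i,e}(x)/k ≥ μ_{i,e}(x) − kL(d_i+1)`. -/
theorem stmt_15 {N E : Type*} [Fintype N] [Nonempty N] [DecidableEq N]
    [Fintype E] [DecidableEq E]
    (ρ : N → Finset E → ℝ) (hρ : ∀ i, IsRank (ρ i))
    (d : N → ℝ) (hd : ∀ i, 0 < d i) (hdρ : ∀ i, d i ≤ ρ i Finset.univ)
    (c : N → E → ℝ → ℝ)
    (hcnonneg : ∀ i e t, 0 ≤ c i e t)
    (hcmono : ∀ i e, Monotone (c i e))
    (hcdiff : ∀ i e, Differentiable ℝ (c i e))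
    (hcconv : ∀ i e, ConvexOn ℝ Set.univ (c i e))
    (L : ℝ)
    (hlip : ∀ i e x y, |c i e y - c i e x| ≤ L * |y - x|)
    (hlip' : ∀ i e x y, |deriv (c i e) y - deriv (c i e) x| ≤ L * |y - x|)
    (k : ℝ) (hk : 0 < k) (hdk : ∀ i, ∃ q : ℕ, d i = k * q)
    (x : N → E → ℝ) (hx : ∀ i, memKBase (ρ i) (d i) k (x i))
    (i : N) (e : E) :
    ((x i e + k) * c i e ((∑ j, x j e) + k) - x i e * c i e (∑ j, x j e)) / k ≤
        (c i e (∑ j, x j e) + x i e * deriv (c i e) (∑ j, x j e)) +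
          k * L * (d i + 1) ∧
      (0 < x i e →
        (x i e * c i e (∑ j, x j e) - (x i e - k) * c i e ((∑ j, x j e) - k)) / k ≥
          (c i e (∑ j, x j e) + x i e * deriv (c i e) (∑ j, x j e)) -
            k * L * (d i + 1)) := by
  have hL : 0 ≤ L := by
    simpa using (abs_nonneg _).trans (hlip i e 0 1)
  obtain ⟨⟨hnonneg, -, hsum⟩, -⟩ := hx i
  have hxd : x i e ≤ d i := by
    rw [← hsum]
    exact Finset.single_le_sum (fun e _ => hnonneg e) (Finset.mem_univ e)
  have hbound : k * (k * L * (x i e + 1)) ≤ k * (k * L * (d i + 1)) := by gcongr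
  have hxe := hnonneg e
  generalize (∑ j, x j e) = t
  constructor
  · have hslope := (abs_le.mp (abs_sub_sub_mul_deriv_le (hcdiff i e) hL (hlip' i e)
      (lt_add_of_pos_right t hk) ⟨le_rfl, (lt_add_of_pos_right t hk).le⟩)).2
    have hval := (abs_le.mp (hlip i e t (t + k))).2
    rw [add_sub_cancel_left] at hslope hval
    rw [abs_of_pos hk] at hval
    have hslope' := mul_le_mul_of_nonneg_left hslope hxe
    have hval' := mul_le_mul_of_nonneg_left hval hk.le
    rw [div_le_iff₀ hk]
    linarith
  · intro _
    have hslope := (abs_le.mp (abs_sub_sub_mul_deriv_le (hcdiff i e) hL (hlip' i e)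
      (sub_lt_self t hk) ⟨(sub_lt_self t hk).le, le_rfl⟩)).1
    have hval := (abs_le.mp (hlip i e (t - k) t)).2
    rw [sub_sub_cancel] at hslope hval
    rw [abs_of_pos hk] at hval
    have hslope' := mul_le_mul_of_nonneg_left hslope hxe
    have hval' := mul_le_mul_of_nonneg_left hval hk.le
    rw [ge_iff_le, le_div_iff₀ hk]
    linarith
end
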